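/- Let Ω be an open subset of ℝⁿ and let f = (u₁, v₁) and g = (u₂, v₂) be H-continuous pairs on Ω. Then there exists a unique H-continuous pair (p_l, p_u) on Ω satisfying u₁(x) + u₂(x) ≤ p_l(x) ≤ p_u(x) ≤ v₁(x) + v₂(x) for all x ∈ Ω. -/

import Mathlib

open Set

/-- Points of `ℝⁿ`. -/
abbrev Pt (n : ℕ) := EuclideanSpace ℝ (Fin n)

/-- Lower Baire operator `I(D,Ω,f)(x) = sup_{δ>0} inf { f y : y ∈ B_δ(x) ∩ D }`,
where `B_δ(x) = { y ∈ Ω : ‖y - x‖ < δ }`. -/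
noncomputable def Ilow {n : ℕ} (D Om : Set (Pt n)) (f : Pt n → ℝ) (x : Pt n) : ℝ :=
  sSup {a : ℝ | ∃ δ : ℝ, 0 < δ ∧
    a = sInf (f '' {y | y ∈ Om ∧ ‖y - x‖ < δ ∧ y ∈ D})}

/-- Upper Baire operator `S(D,Ω,f)(x) = inf_{δ>0} sup { f y : y ∈ B_δ(x) ∩ D }`. -/
noncomputable def Shigh {n : ℕ} (D Om : Set (Pt n)) (f : Pt n → ℝ) (x : Pt n) : ℝ :=
  sInf {a : ℝ | ∃ δ : ℝ, 0 < δ ∧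
    a = sSup (f '' {y | y ∈ Om ∧ ‖y - x‖ < δ ∧ y ∈ D})}

/-- `f`, defined on `D ⊆ Ω`, is locally bounded relative to `Ω`. -/
def LocBddOn {n : ℕ} (Om D : Set (Pt n)) (f : Pt n → ℝ) : Prop :=
  ∀ x ∈ Om, ∃ δ : ℝ, 0 < δ ∧ ∃ M : ℝ,
    ∀ y, y ∈ Om → ‖y - x‖ < δ → y ∈ D → |f y| < M

/-- `(u, v)` encodes an interval-valued function `x ↦ [u x, v x]` on `Om`. -/
def IntervalPair {n : ℕ} (Om : Set (Pt n)) (u v : Pt n → ℝ) : Prop :=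
  LocBddOn Om Om u ∧ LocBddOn Om Om v ∧ ∀ x ∈ Om, u x ≤ v x

/-- The pair `(u, v)` is S-continuous on `Om`: `I(u) = u` and `S(v) = v`. -/
def SCont {n : ℕ} (Om : Set (Pt n)) (u v : Pt n → ℝ) : Prop :=
  ∀ x ∈ Om, Ilow Om Om u x = u x ∧ Shigh Om Om v x = v x

/-- The pair `(u, v)` is Hausdorff continuous on `Om`. -/
def HCont {n : ℕ} (Om : Set (Pt n)) (u v : Pt n → ℝ) : Prop :=
  ∀ p q : Pt n → ℝ, LocBddOn Om Om p → LocBddOn Om Om q →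
    (∀ x ∈ Om, u x ≤ p x ∧ p x ≤ q x ∧ q x ≤ v x) →
    ∀ x ∈ Om, Ilow Om Om p x = u x ∧ Shigh Om Om q x = v x

/-- `(u, v)` is an H-continuous interval pair on `Om`. -/
def HContPair {n : ℕ} (Om : Set (Pt n)) (u v : Pt n → ℝ) : Prop :=
  IntervalPair Om u v ∧ HCont Om u v

/-- Lower endpoint of the pointwise interval product. -/
noncomputable def imin {n : ℕ} (u₁ v₁ u₂ v₂ : Pt n → ℝ) (x : Pt n) : ℝ :=
  min (min (u₁ x * u₂ x) (u₁ x * v₂ x)) (min (v₁ x * u₂ x) (v₁ x * v₂ x))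

/-- Upper endpoint of the pointwise interval product. -/
noncomputable def imax {n : ℕ} (u₁ v₁ u₂ v₂ : Pt n → ℝ) (x : Pt n) : ℝ :=
  max (max (u₁ x * u₂ x) (u₁ x * v₂ x)) (max (v₁ x * u₂ x) (v₁ x * v₂ x))

/-- `(pl, pu)` is the H-continuous pair contained pointwise in the interval sum of
`(u₁, v₁)` and `(u₂, v₂)`, i.e. `(pl, pu) = (u₁,v₁) ⊕ (u₂,v₂)`. -/
def IsOplus {n : ℕ} (Om : Set (Pt n)) (u₁ v₁ u₂ v₂ pl pu : Pt n → ℝ) : Prop :=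
  HContPair Om pl pu ∧
    ∀ x ∈ Om, u₁ x + u₂ x ≤ pl x ∧ pl x ≤ pu x ∧ pu x ≤ v₁ x + v₂ x

/-- `(ql, qu)` is the H-continuous pair contained pointwise in the interval product of
`(u₁, v₁)` and `(u₂, v₂)`, i.e. `(ql, qu) = (u₁,v₁) ⊗ (u₂,v₂)`. -/
def IsOtimes {n : ℕ} (Om : Set (Pt n)) (u₁ v₁ u₂ v₂ ql qu : Pt n → ℝ) : Prop :=
  HContPair Om ql qu ∧
    ∀ x ∈ Om, imin u₁ v₁ u₂ v₂ x ≤ ql x ∧ ql x ≤ qu x ∧ qu x ≤ imax u₁ v₁ u₂ v₂ x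

/-- bounded on bounded subsets of `Om` -/
def BB {n : ℕ} (Om : Set (Pt n)) (f : Pt n → ℝ) : Prop :=
  ∀ x ∈ Om, ∀ δ : ℝ, 0 < δ → ∃ M : ℝ, ∀ y ∈ Om, ‖y - x‖ < δ → |f y| ≤ M

lemma Ilow_eq {n : ℕ} (Om : Set (Pt n)) (f : Pt n → ℝ) (x : Pt n) :
    Ilow Om Om f x = - Shigh Om Om (fun y => - f y) x := by
  unfold Ilow Shigh
  rw [Real.sInf_def, neg_neg]
  congr 1
  ext a
  simp only [Set.mem_neg, Set.mem_setOf_eq]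
  have key : ∀ s : Set (Pt n), sInf (f '' s) = - sSup ((fun y => - f y) '' s) := by
    intro s
    rw [Real.sInf_def]
    congr 2
    ext b
    simp only [Set.mem_neg, Set.mem_image]
    constructor
    · rintro ⟨y, hy, h⟩; exact ⟨y, hy, by linarith⟩
    · rintro ⟨y, hy, h⟩; exact ⟨y, hy, by linarith⟩
  constructor
  · rintro ⟨δ, h, e⟩; exact ⟨δ, h, by rw [e, key, neg_neg]⟩
  · rintro ⟨δ, h, e⟩; exact ⟨δ, h, by rw [key, ← e, neg_neg]⟩

lemma BB.neg {n : ℕ} {Om : Set (Pt n)} {f : Pt n → ℝ} (h : BB Om f) :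
    BB Om (fun y => - f y) := by
  intro x hx δ hδ
  obtain ⟨M, hM⟩ := h x hx δ hδ
  exact ⟨M, fun y hy hyx => by rw [abs_neg]; exact hM y hy hyx⟩

lemma BB.btw {n : ℕ} {Om : Set (Pt n)} {u v p : Pt n → ℝ} (hu : BB Om u) (hv : BB Om v)
    (h : ∀ x ∈ Om, u x ≤ p x ∧ p x ≤ v x) : BB Om p := by
  intro x hx δ hδ
  obtain ⟨M, hM⟩ := hu x hx δ hδ
  obtain ⟨N, hN⟩ := hv x hx δ hδ
  refine ⟨max M N, fun y hy hyx => ?_⟩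
  have a := abs_le.1 (hM y hy hyx)
  have b := abs_le.1 (hN y hy hyx)
  have c := h y hy
  have := le_max_left M N
  have := le_max_right M N
  rw [abs_le]; constructor <;> linarith

lemma BB.add {n : ℕ} {Om : Set (Pt n)} {u v : Pt n → ℝ} (hu : BB Om u) (hv : BB Om v) :
    BB Om (fun x => u x + v x) := by
  intro x hx δ hδ
  obtain ⟨M, hM⟩ := hu x hx δ hδ
  obtain ⟨N, hN⟩ := hv x hx δ hδ
  exact ⟨M + N, fun y hy hyx => (abs_add_le _ _).trans (add_le_add (hM y hy hyx) (hN y hy hyx))⟩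

lemma BB.loc {n : ℕ} {Om : Set (Pt n)} {u : Pt n → ℝ} (hu : BB Om u) : LocBddOn Om Om u := by
  intro x hx
  obtain ⟨M, hM⟩ := hu x hx 1 one_pos
  exact ⟨1, one_pos, M + 1, fun y hy hyx _ => by linarith [hM y hy hyx]⟩

lemma S_bddBelow {n : ℕ} {Om : Set (Pt n)} (f : Pt n → ℝ) {x : Pt n} (hx : x ∈ Om) :
    BddBelow {a : ℝ | ∃ δ : ℝ, 0 < δ ∧
    a = sSup (f '' {y | y ∈ Om ∧ ‖y - x‖ < δ ∧ y ∈ Om})} := by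
  refine ⟨min 0 (f x), ?_⟩
  rintro a ⟨δ, hδ, rfl⟩
  by_cases hb : BddAbove (f '' {y | y ∈ Om ∧ ‖y - x‖ < δ ∧ y ∈ Om})
  · exact (min_le_right _ _).trans (le_csSup hb ⟨x, ⟨hx, by simpa using hδ, hx⟩, rfl⟩)
  · rw [Real.sSup_of_not_bddAbove hb]; exact min_le_left _ _

lemma S_lt {n : ℕ} {Om : Set (Pt n)} {f : Pt n → ℝ} (hf : BB Om f) {x : Pt n} (hx : x ∈ Om)
    {a : ℝ} (h : Shigh Om Om f x < a) :
    ∃ δ : ℝ, 0 < δ ∧ ∀ y ∈ Om, ‖y - x‖ < δ → f y < a := by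
  have hne : {a : ℝ | ∃ δ : ℝ, 0 < δ ∧
      a = sSup (f '' {y | y ∈ Om ∧ ‖y - x‖ < δ ∧ y ∈ Om})}.Nonempty := ⟨_, 1, one_pos, rfl⟩
  obtain ⟨b, ⟨δ, hδ, rfl⟩, hb⟩ := exists_lt_of_csInf_lt hne h
  refine ⟨δ, hδ, fun y hy hyx => ?_⟩
  refine lt_of_le_of_lt ?_ hb
  refine le_csSup ?_ ⟨y, ⟨hy, hyx, hy⟩, rfl⟩
  obtain ⟨M, hM⟩ := hf x hx δ hδ
  refine ⟨M, ?_⟩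
  rintro _ ⟨z, ⟨hz, hzx, _⟩, rfl⟩
  exact (le_abs_self _).trans (hM z hz hzx)

lemma S_le {n : ℕ} {Om : Set (Pt n)} {f : Pt n → ℝ} {x : Pt n} (hx : x ∈ Om)
    {a δ : ℝ} (hδ : 0 < δ) (h : ∀ y ∈ Om, ‖y - x‖ < δ → f y ≤ a) :
    Shigh Om Om f x ≤ a := by
  refine (csInf_le (S_bddBelow f hx) ⟨δ, hδ, rfl⟩).trans (csSup_le ?_ ?_)
  · exact ⟨_, x, ⟨hx, by simpa using hδ, hx⟩, rfl⟩
  · rintro _ ⟨z, ⟨hz, hzx, _⟩, rfl⟩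
    exact h z hz hzx

lemma le_S {n : ℕ} {Om : Set (Pt n)} {f : Pt n → ℝ} (hf : BB Om f) {x : Pt n} (hx : x ∈ Om) :
    f x ≤ Shigh Om Om f x := by
  refine le_of_forall_gt fun a ha => ?_
  obtain ⟨δ, hδ, h⟩ := S_lt hf hx ha
  exact h x hx (by simpa using hδ)

lemma S_mono {n : ℕ} {Om : Set (Pt n)} {f g : Pt n → ℝ} (hg : BB Om g)
    (hfg : ∀ x ∈ Om, f x ≤ g x) {x : Pt n} (hx : x ∈ Om) :
    Shigh Om Om f x ≤ Shigh Om Om g x := by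
  refine le_of_forall_gt_imp_ge_of_dense fun a ha => ?_
  obtain ⟨δ, hδ, h⟩ := S_lt hg hx ha
  exact S_le hx hδ fun y hy hyx => (hfg y hy).trans (h y hy hyx).le

lemma S_le_of_ball {n : ℕ} {Om : Set (Pt n)} {f : Pt n → ℝ} {x : Pt n}
    {a δ : ℝ} (h : ∀ y ∈ Om, ‖y - x‖ < δ → f y ≤ a) :
    ∀ y ∈ Om, ‖y - x‖ < δ → Shigh Om Om f y ≤ a := by
  intro y hy hyx
  refine S_le hy (sub_pos.2 hyx) fun z hz hzy => h z hz ?_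
  have := norm_sub_le_norm_sub_add_norm_sub z y x
  linarith

lemma BB.S {n : ℕ} {Om : Set (Pt n)} {f : Pt n → ℝ} (hf : BB Om f) : BB Om (Shigh Om Om f) := by
  intro x hx δ hδ
  obtain ⟨M, hM⟩ := hf x hx δ hδ
  refine ⟨M, fun y hy hyx => abs_le.2 ⟨?_, ?_⟩⟩
  · exact (abs_le.1 (hM y hy hyx)).1.trans (le_S hf hy)
  · exact S_le_of_ball (fun z hz hzx => (abs_le.1 (hM z hz hzx)).2) y hy hyx

lemma S_idem {n : ℕ} {Om : Set (Pt n)} {f : Pt n → ℝ} (hf : BB Om f) {x : Pt n} (hx : x ∈ Om) :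
    Shigh Om Om (Shigh Om Om f) x = Shigh Om Om f x := by
  refine le_antisymm ?_ (le_S hf.S hx)
  refine le_of_forall_gt_imp_ge_of_dense fun a ha => ?_
  obtain ⟨δ, hδ, h⟩ := S_lt hf hx ha
  exact S_le hx hδ (S_le_of_ball fun y hy hyx => (h y hy hyx).le)

lemma BB.I {n : ℕ} {Om : Set (Pt n)} {f : Pt n → ℝ} (hf : BB Om f) : BB Om (Ilow Om Om f) := by
  have : Ilow Om Om f = fun x => - Shigh Om Om (fun y => - f y) x := funext (Ilow_eq Om f)
  rw [this]; exact hf.neg.S.neg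

lemma I_le {n : ℕ} {Om : Set (Pt n)} {f : Pt n → ℝ} (hf : BB Om f) {x : Pt n} (hx : x ∈ Om) :
    Ilow Om Om f x ≤ f x := by
  rw [Ilow_eq]; linarith [le_S hf.neg hx]

lemma I_mono {n : ℕ} {Om : Set (Pt n)} {f g : Pt n → ℝ} (hf : BB Om f)
    (hfg : ∀ x ∈ Om, f x ≤ g x) {x : Pt n} (hx : x ∈ Om) :
    Ilow Om Om f x ≤ Ilow Om Om g x := by
  rw [Ilow_eq, Ilow_eq]
  exact neg_le_neg (S_mono hf.neg (fun y hy => neg_le_neg (hfg y hy)) hx)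

lemma I_idem {n : ℕ} {Om : Set (Pt n)} {f : Pt n → ℝ} (hf : BB Om f) {x : Pt n} (hx : x ∈ Om) :
    Ilow Om Om (Ilow Om Om f) x = Ilow Om Om f x := by
  have : Ilow Om Om f = fun x => - Shigh Om Om (fun y => - f y) x := funext (Ilow_eq Om f)
  rw [this, Ilow_eq]
  simp only [neg_neg]
  exact congrArg _ (S_idem hf.neg hx)

lemma lt_I {n : ℕ} {Om : Set (Pt n)} {f : Pt n → ℝ} (hf : BB Om f) {x : Pt n} (hx : x ∈ Om)
    {a : ℝ} (h : a < Ilow Om Om f x) :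
    ∃ δ : ℝ, 0 < δ ∧ ∀ y ∈ Om, ‖y - x‖ < δ → a < f y := by
  rw [Ilow_eq] at h
  obtain ⟨δ, hδ, h'⟩ := S_lt (a := -a) hf.neg hx (by linarith)
  exact ⟨δ, hδ, fun y hy hyx => by linarith [h' y hy hyx]⟩

lemma le_I {n : ℕ} {Om : Set (Pt n)} {f : Pt n → ℝ} {x : Pt n} (hx : x ∈ Om)
    {a δ : ℝ} (hδ : 0 < δ) (h : ∀ y ∈ Om, ‖y - x‖ < δ → a ≤ f y) :
    a ≤ Ilow Om Om f x := by
  rw [Ilow_eq]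
  have := S_le (f := fun y => - f y) (a := -a) hx hδ fun y hy hyx => neg_le_neg (h y hy hyx)
  linarith

lemma bdd_of_S {n : ℕ} {Om : Set (Pt n)} {v : Pt n → ℝ}
    (h : ∀ x ∈ Om, Shigh Om Om v x = v x) :
    ∀ x ∈ Om, ∀ δ : ℝ, 0 < δ → ∃ M : ℝ, ∀ y ∈ Om, ‖y - x‖ < δ → v y ≤ M := by
  intro x hx δ hδ
  by_contra! hc
  have key : ∀ y ∈ Om, v y ≤ 0 := by
    intro y hy
    rw [← h y hy]
    have hpos : 0 < δ + ‖y - x‖ := by positivity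
    refine csInf_le (S_bddBelow v hy) ⟨δ + ‖y - x‖, hpos, ?_⟩
    rw [Real.sSup_of_not_bddAbove]
    rintro ⟨M, hM⟩
    obtain ⟨z, hz, hzx, hlt⟩ := hc M
    refine absurd (hM ⟨z, ⟨hz, ?_, hz⟩, rfl⟩) (not_le.2 hlt)
    have := norm_sub_le_norm_sub_add_norm_sub z x y
    rw [norm_sub_rev x y] at this
    linarith
  obtain ⟨z, hz, _, hlt⟩ := hc 0
  linarith [key z hz]

lemma HContPair.facts {n : ℕ} {Om : Set (Pt n)} {u v : Pt n → ℝ} (h : HContPair Om u v) :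
    BB Om u ∧ BB Om v ∧ (∀ x ∈ Om, Ilow Om Om u x = u x) ∧ (∀ x ∈ Om, Shigh Om Om v x = v x) ∧
    (∀ x ∈ Om, Ilow Om Om v x = u x) ∧ (∀ x ∈ Om, Shigh Om Om u x = v x) ∧
    ∀ x ∈ Om, u x ≤ v x := by
  obtain ⟨⟨hu, hv, huv⟩, hc⟩ := h
  have a := hc u v hu hv fun x hx => ⟨le_rfl, huv x hx, le_rfl⟩
  have b := hc u u hu hu fun x hx => ⟨le_rfl, le_rfl, huv x hx⟩
  have c := hc v v hv hv fun x hx => ⟨huv x hx, le_rfl, le_rfl⟩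
  have bv := bdd_of_S fun x hx => (a x hx).2
  have bu := bdd_of_S (Om := Om) (v := fun y => - u y) fun x hx => by
    have := (a x hx).1
    rw [Ilow_eq] at this
    linarith
  have B : ∀ x ∈ Om, ∀ δ : ℝ, 0 < δ → ∃ M : ℝ, ∀ y ∈ Om, ‖y - x‖ < δ → |u y| ≤ M ∧ |v y| ≤ M := by
    intro x hx δ hδ
    obtain ⟨M, hM⟩ := bu x hx δ hδ
    obtain ⟨N, hN⟩ := bv x hx δ hδ
    refine ⟨max M N, fun y hy hyx => ?_⟩
    have h1 := hM y hy hyx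
    have h2 := hN y hy hyx
    have h3 := huv y hy
    have := le_max_left M N
    have := le_max_right M N
    constructor <;> rw [abs_le] <;> constructor <;> linarith
  refine ⟨?_, ?_, fun x hx => (a x hx).1, fun x hx => (a x hx).2, fun x hx => (c x hx).1,
    fun x hx => (b x hx).2, huv⟩
  · intro x hx δ hδ
    obtain ⟨M, hM⟩ := B x hx δ hδ
    exact ⟨M, fun y hy hyx => (hM y hy hyx).1⟩
  · intro x hx δ hδ
    obtain ⟨M, hM⟩ := B x hx δ hδ
    exact ⟨M, fun y hy hyx => (hM y hy hyx).2⟩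

lemma HContPair.dense {n : ℕ} {Om : Set (Pt n)} {u v : Pt n → ℝ} (h : HContPair Om u v)
    {x : Pt n} (hx : x ∈ Om) {δ ε : ℝ} (hδ : 0 < δ) (hε : 0 < ε) :
    ∃ z ∈ Om, ‖z - x‖ < δ ∧ ∃ η : ℝ, 0 < η ∧ ∀ y ∈ Om, ‖y - z‖ < η → v y - u y < ε := by
  obtain ⟨bu, bv, Iu, Sv, Iv, Su, huv⟩ := h.facts
  obtain ⟨d, hd, H⟩ := S_lt (a := v x + ε / 4) bv hx (by rw [Sv x hx]; linarith)
  have : ∃ z ∈ Om, ‖z - x‖ < min δ d ∧ v x - ε / 4 < u z := by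
    by_contra! hc
    have := S_le hx (lt_min hδ hd) hc
    rw [Su x hx] at this
    linarith
  obtain ⟨z, hz, hzx, hlt⟩ := this
  have hz1 := H z hz (hzx.trans_le (min_le_right _ _))
  obtain ⟨d1, hd1, H1⟩ := S_lt (a := v x + ε / 4) bv hz (by rw [Sv z hz]; linarith)
  obtain ⟨d2, hd2, H2⟩ := lt_I (a := v x - ε / 4) bu hz (by rw [Iu z hz]; linarith)
  refine ⟨z, hz, hzx.trans_le (min_le_left _ _), min d1 d2, lt_min hd1 hd2, fun y hy hyz => ?_⟩
  have := H1 y hy (hyz.trans_le (min_le_left _ _))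
  have := H2 y hy (hyz.trans_le (min_le_right _ _))
  linarith

lemma uniq_aux {n : ℕ} {Om : Set (Pt n)} {u₁ v₁ u₂ v₂ pl pu ql qu : Pt n → ℝ}
    (h₁ : HContPair Om u₁ v₁) (h₂ : HContPair Om u₂ v₂)
    (hp : HContPair Om pl pu) (hq : HContPair Om ql qu)
    (hp' : ∀ x ∈ Om, u₁ x + u₂ x ≤ pl x ∧ pl x ≤ pu x ∧ pu x ≤ v₁ x + v₂ x)
    (hq' : ∀ x ∈ Om, u₁ x + u₂ x ≤ ql x ∧ ql x ≤ qu x ∧ qu x ≤ v₁ x + v₂ x) :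
    ∀ x ∈ Om, ql x ≤ pl x ∧ qu x ≤ pu x := by
  obtain ⟨bpl, bpu, Ipl, Spu, Ipu, Spl, _⟩ := hp.facts
  obtain ⟨bql, bqu, Iql, Squ, Iqu, Sql, _⟩ := hq.facts
  have key : ∀ x ∈ Om, ql x ≤ pu x := by
    intro x hx
    refine le_of_forall_pos_le_add fun ε hε => ?_
    obtain ⟨d1, hd1, H1⟩ := S_lt (a := pu x + ε / 4) bpu hx (by rw [Spu x hx]; linarith)
    obtain ⟨d2, hd2, H2⟩ := lt_I (a := ql x - ε / 4) bql hx (by rw [Iql x hx]; linarith)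
    have hd := lt_min hd1 hd2
    obtain ⟨z, hz, hzx, η, hη, Hz⟩ := h₁.dense hx hd (by linarith : 0 < ε / 4)
    obtain ⟨w, hw, hwz, η', hη', Hw⟩ := h₂.dense hz (lt_min hη (sub_pos.2 hzx))
      (by linarith : 0 < ε / 4)
    have a := Hz w hw (hwz.trans_le (min_le_left _ _))
    have b := Hw w hw (by simpa using hη')
    have hwx : ‖w - x‖ < min d1 d2 := by
      have := norm_sub_le_norm_sub_add_norm_sub w z x
      have := hwz.trans_le (min_le_right _ _)
      linarith
    have := H1 w hw (hwx.trans_le (min_le_left _ _))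
    have := H2 w hw (hwx.trans_le (min_le_right _ _))
    have := hp' w hw
    have := hq' w hw
    linarith
  intro x hx
  constructor
  · rw [← Iql x hx, ← Ipu x hx]; exact I_mono bql key hx
  · rw [← Sql x hx, ← Spu x hx]; exact S_mono bpu key hx

theorem stmt7 {n : ℕ} (Om : Set (Pt n)) (hOm : IsOpen Om)
    (u₁ v₁ u₂ v₂ : Pt n → ℝ)
    (h₁ : HContPair Om u₁ v₁) (h₂ : HContPair Om u₂ v₂) :
    ∃ pl pu : Pt n → ℝ,
      (HContPair Om pl pu ∧
        ∀ x ∈ Om, u₁ x + u₂ x ≤ pl x ∧ pl x ≤ pu x ∧ pu x ≤ v₁ x + v₂ x) ∧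
      ∀ ql qu : Pt n → ℝ, HContPair Om ql qu →
        (∀ x ∈ Om, u₁ x + u₂ x ≤ ql x ∧ ql x ≤ qu x ∧ qu x ≤ v₁ x + v₂ x) →
        ∀ x ∈ Om, ql x = pl x ∧ qu x = pu x := by
  obtain ⟨bu1, bv1, Iu1, Sv1, -, -, huv1⟩ := h₁.facts
  obtain ⟨bu2, bv2, Iu2, Sv2, -, -, huv2⟩ := h₂.facts
  have bu := bu1.add bu2
  have bv := bv1.add bv2
  set u : Pt n → ℝ := fun x => u₁ x + u₂ x with hu
  set v : Pt n → ℝ := fun x => v₁ x + v₂ x with hv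
  have huv : ∀ x ∈ Om, u x ≤ v x := fun x hx => add_le_add (huv1 x hx) (huv2 x hx)
  have Iu : ∀ x ∈ Om, u x ≤ Ilow Om Om u x := by
    intro x hx
    refine le_of_forall_pos_le_add fun ε hε => ?_
    obtain ⟨d1, hd1, H1⟩ := lt_I (a := u₁ x - ε / 2) bu1 hx (by rw [Iu1 x hx]; linarith)
    obtain ⟨d2, hd2, H2⟩ := lt_I (a := u₂ x - ε / 2) bu2 hx (by rw [Iu2 x hx]; linarith)
    have := le_I (f := u) (a := u x - ε) hx (lt_min hd1 hd2) fun y hy hyx => by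
      have := H1 y hy (hyx.trans_le (min_le_left _ _))
      have := H2 y hy (hyx.trans_le (min_le_right _ _))
      simp only [hu]; linarith
    linarith
  have Sv : ∀ x ∈ Om, Shigh Om Om v x ≤ v x := by
    intro x hx
    refine le_of_forall_pos_le_add fun ε hε => ?_
    obtain ⟨d1, hd1, H1⟩ := S_lt (a := v₁ x + ε / 2) bv1 hx (by rw [Sv1 x hx]; linarith)
    obtain ⟨d2, hd2, H2⟩ := S_lt (a := v₂ x + ε / 2) bv2 hx (by rw [Sv2 x hx]; linarith)
    exact S_le (f := v) (a := v x + ε) hx (lt_min hd1 hd2) fun y hy hyx => by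
      have := H1 y hy (hyx.trans_le (min_le_left _ _))
      have := H2 y hy (hyx.trans_le (min_le_right _ _))
      simp only [hv]; linarith
  set pu := Shigh Om Om u with hpu
  set pl := Ilow Om Om pu with hpl
  have bpu : BB Om pu := bu.S
  have bpl : BB Om pl := bpu.I
  have e1 : ∀ x ∈ Om, u x ≤ pl x := fun x hx =>
    (Iu x hx).trans (I_mono bu (fun y hy => le_S bu hy) hx)
  have e2 : ∀ x ∈ Om, pl x ≤ pu x := fun x hx => I_le bpu hx
  have e3 : ∀ x ∈ Om, pu x ≤ v x := fun x hx => (S_mono bv huv hx).trans (Sv x hx)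
  have Spl : ∀ x ∈ Om, pu x ≤ Shigh Om Om pl x := fun x hx => S_mono bpl e1 hx
  have hH : HContPair Om pl pu := by
    refine ⟨⟨bpl.loc, bpu.loc, e2⟩, fun p q _ _ hpq x hx => ?_⟩
    have bp : BB Om p := bpl.btw bpu fun y hy => ⟨(hpq y hy).1, (hpq y hy).2.1.trans (hpq y hy).2.2⟩
    have bq : BB Om q := bpl.btw bpu fun y hy => ⟨(hpq y hy).1.trans (hpq y hy).2.1, (hpq y hy).2.2⟩
    refine ⟨le_antisymm ?_ ?_, le_antisymm ?_ ?_⟩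
    · exact I_mono bp (fun y hy => (hpq y hy).2.1.trans (hpq y hy).2.2) hx
    · rw [hpl, ← I_idem bpu hx]
      exact I_mono bpl (fun y hy => (hpq y hy).1) hx
    · rw [hpu, ← S_idem bu hx]
      exact S_mono bpu (fun y hy => (hpq y hy).2.2) hx
    · exact (Spl x hx).trans (S_mono bq (fun y hy => (hpq y hy).1.trans (hpq y hy).2.1) hx)
  have hb : ∀ x ∈ Om, u₁ x + u₂ x ≤ pl x ∧ pl x ≤ pu x ∧ pu x ≤ v₁ x + v₂ x :=
    fun x hx => ⟨e1 x hx, e2 x hx, e3 x hx⟩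
  refine ⟨pl, pu, ⟨hH, hb⟩, fun ql qu hq hq' x hx => ?_⟩
  have a := uniq_aux h₁ h₂ hH hq hb hq' x hx
  have b := uniq_aux h₁ h₂ hq hH hq' hb x hx
  exact ⟨le_antisymm a.1 b.1, le_antisymm a.2 b.2⟩
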